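/- arXiv:2602.22838 — 2 statements merged into one kernel-verified Lean document; each statement's English description precedes it below -/
import Mathlib

section
/- Let F be any social choice correspondence that is (1) neutral, (2) biranking-majority-consistent, and (3) majoritarian. Then for every integer k with 1 ≤ k < n−2, F is not k-augmentation strategyproof (and for k = 0 this follows from the Gibbard–Satterthwaite theorem); consequently the manipulation potential of F satisfies Φ(F) ≥ n−2. -/
open Finset

/-- A strict linear preference order over `m` candidates, encoded as the permutation sending
each candidate to its rank; rank `0` is the most preferred position, so
`c ≻ c'` iff `p c < p c'`. -/
abbrev Pref (m : ℕ) := Equiv.Perm (Fin m)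

/-- A profile of `N` voters, each with a strict preference over `m` candidates. -/
abbrev Profile (m N : ℕ) := Fin N → Pref m

/-- A social choice correspondence: for each number `N` of voters, it maps each `N`-voter
profile to a set of (tied) winners. -/
abbrev SCC (m : ℕ) := (N : ℕ) → Profile m N → Finset (Fin m)

/-- The profile `P` with `k` extra copies of voter `i`'s preference appended. -/
def addCopies {m n : ℕ} (P : Profile m n) (i : Fin n) (k : ℕ) : Profile m (n + k) :=
  fun j => if h : (j : ℕ) < n then P ⟨j, h⟩ else P i

/-- Break a tie among the candidates in `A` using the linear tie-breaking order `τ`: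
the winner is the `τ`-maximal (lowest `τ`-rank) element of `A`. -/
noncomputable def tiebreak {m : ℕ} [NeZero m] (τ : Pref m) (A : Finset (Fin m)) : Fin m :=
  if h : A.Nonempty then τ.symm ((A.image (fun c => τ c)).min' (h.image _)) else 0

/-- `F` is `k`-augmentation strategyproof on `n`-voter profiles: for every tie-breaker `τ`,
profile `P`, voter `i`, and alternative preference `q`, voter `i` weakly prefers the outcome
obtained by adding `k` truthful copies of her vote to the outcome of the manipulation `q`. -/
def kASP (m n : ℕ) [NeZero m] (F : SCC m) (k : ℕ) : Prop :=
  ∀ (τ : Pref m) (P : Profile m n) (i : Fin n) (q : Pref m),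
    (P i) (tiebreak τ (F (n + k) (addCopies P i k))) ≤
      (P i) (tiebreak τ (F n (Function.update P i q)))

/-- The manipulation potential of `F` on `n`-voter profiles: the least `k` such that `F` is
`k'`-augmentation strategyproof for all `k' ≥ k`, and `⊤` (i.e. `∞`) if no such `k` exists. -/
noncomputable def manipPot (m n : ℕ) [NeZero m] (F : SCC m) : ℕ∞ :=
  sInf ((fun k : ℕ => (k : ℕ∞)) '' {k : ℕ | ∀ k' : ℕ, k ≤ k' → kASP m n F k'})

/-- The margin of `c` against `d`: the number of voters preferring `c` to `d` minus the
number of voters preferring `d` to `c`. -/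
def margin {m N : ℕ} (P : Profile m N) (c d : Fin m) : ℤ :=
  ((Finset.univ.filter (fun i => P i c < P i d)).card : ℤ) -
    ((Finset.univ.filter (fun i => P i d < P i c)).card : ℤ)

lemma cand_cases (x : ℕ) : x = 0 ∨ x = 1 ∨ x = 2 ∨ (x ≠ 0 ∧ x ≠ 1 ∧ x ≠ 2 ∧ 2 < x) := by omega

def sg (x y : ℕ) : ℤ := if x < y then 1 else if y < x then -1 else 0

lemma margin_eq_sum {m N : ℕ} (P : Profile m N) (c d : Fin m) :
    margin P c d = ∑ i, sg (P i c).val (P i d).val := by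
  unfold margin
  rw [Finset.card_filter, Finset.card_filter]
  push_cast
  rw [← Finset.sum_sub_distrib]
  refine Finset.sum_congr rfl fun i _ => ?_
  unfold sg
  simp only [Fin.lt_def]
  split_ifs <;> omega

/-- the value maps of the preferences b>c>a, c>a>b, b>a>c -/
def vR (x : ℕ) : ℕ := if x = 0 then 2 else if x = 1 then 0 else if x = 2 then 1 else x
def vL (x : ℕ) : ℕ := if x = 0 then 1 else if x = 1 then 2 else if x = 2 then 0 else x
def vS (x : ℕ) : ℕ := if x = 0 then 1 else if x = 1 then 0 else x

def pR {m : ℕ} (hm : 3 ≤ m) : Pref m where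
  toFun x := ⟨vR x.val, by have := x.isLt; unfold vR; split_ifs <;> omega⟩
  invFun x := ⟨vL x.val, by have := x.isLt; unfold vL; split_ifs <;> omega⟩
  left_inv x := by 
    apply Fin.ext
    rcases cand_cases x.val with h | h | h | ⟨h0, h1, h2, h⟩ <;> simp [vR, vL, *]
  right_inv x := by 
    apply Fin.ext
    rcases cand_cases x.val with h | h | h | ⟨h0, h1, h2, h⟩ <;> simp [vR, vL, *]

def pS {m : ℕ} (hm : 3 ≤ m) : Pref m where
  toFun x := ⟨vS x.val, by have := x.isLt; unfold vS; split_ifs <;> omega⟩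
  invFun x := ⟨vS x.val, by have := x.isLt; unfold vS; split_ifs <;> omega⟩
  left_inv x := by 
    apply Fin.ext
    rcases cand_cases x.val with h | h | h | ⟨h0, h1, h2, h⟩ <;> simp [vS, *]
  right_inv x := by 
    apply Fin.ext
    rcases cand_cases x.val with h | h | h | ⟨h0, h1, h2, h⟩ <;> simp [vS, *]

lemma pR_val {m : ℕ} (hm : 3 ≤ m) (x : Fin m) : (pR hm x).val = vR x.val := rfl
lemma pL_val {m : ℕ} (hm : 3 ≤ m) (x : Fin m) : ((pR hm).symm x).val = vL x.val := rfl
lemma pS_val {m : ℕ} (hm : 3 ≤ m) (x : Fin m) : (pS hm x).val = vS x.val := rfl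

/-- A profile: first voter `q`, then `A` voters `y`, `B` voters `z`, then the rest `x`. -/
def prof {m : ℕ} (q x y z : Pref m) (A B N : ℕ) : Profile m N :=
  fun j => if j.val = 0 then q else if j.val < 1 + A then y else if j.val < 1 + A + B then z else x

lemma margin_prof {m : ℕ} (q x y z : Pref m) (A B k : ℕ) (c d : Fin m) :
    margin (prof q x y z A B (1 + A + B + k)) c d =
      sg (q c) (q d) + A * sg (y c) (y d) + B * sg (z c) (z d) + k * sg (x c) (x d) := by
  rw [margin_eq_sum]
  let f : ℕ → Pref m := fun j =>
    if j = 0 then q else if j < 1 + A then y else if j < 1 + A + B then z else x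
  have h1 : ∑ i, sg (prof q x y z A B (1 + A + B + k) i c).val
      (prof q x y z A B (1 + A + B + k) i d).val =
      ∑ i ∈ Finset.range (1 + A + B + k), sg (f i c).val (f i d).val := by
    rw [← Fin.sum_univ_eq_sum_range (fun i => sg (f i c).val (f i d).val)]
    rfl
  rw [h1, Finset.sum_range_add, Finset.sum_range_add, Finset.sum_range_add]
  have e0 : ∑ i ∈ Finset.range 1, sg (f i c).val (f i d).val = sg (q c) (q d) := by simp [f]
  have e1 : ∀ i ∈ Finset.range A, sg (f (1 + i) c).val (f (1 + i) d).val = sg (y c) (y d) := by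
    intro i hi
    have hi := Finset.mem_range.1 hi
    have : f (1 + i) = y := by simp only [f]; split_ifs <;> first | rfl | omega
    rw [this]
  have e2 : ∀ i ∈ Finset.range B,
      sg (f (1 + A + i) c).val (f (1 + A + i) d).val = sg (z c) (z d) := by
    intro i hi
    have hi := Finset.mem_range.1 hi
    have : f (1 + A + i) = z := by simp only [f]; split_ifs <;> first | rfl | omega
    rw [this]
  have e3 : ∀ i ∈ Finset.range k,
      sg (f (1 + A + B + i) c).val (f (1 + A + B + i) d).val = sg (x c) (x d) := by
    intro i hi
    have : f (1 + A + B + i) = x := by simp only [f]; split_ifs <;> first | rfl | omega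
    rw [this]
  rw [e0, Finset.sum_congr rfl e1, Finset.sum_congr rfl e2, Finset.sum_congr rfl e3]
  simp

lemma sg_mul_sign (t : ℤ) (ht : 0 < t) (x y : ℕ) : (t * sg x y).sign = sg x y := by
  rw [Int.sign_mul, Int.sign_eq_one_of_pos ht, one_mul]
  unfold sg; split_ifs <;> simp

/-- sign pattern of the cycle 0 > 1 > 2 > 0, all others below -/
def cyc (x y : ℕ) : ℤ :=
  if x = 0 ∧ y = 2 then -1 else if x = 2 ∧ y = 0 then 1 else sg x y

lemma sign_cyc (A B k : ℕ) (h1 : B ≤ A) (h2 : A < B + k + 1) (h3 : k + 1 < A + B) (x y : ℕ) :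
    (sg x y + A * sg (vR x) (vR y) + B * sg (vL x) (vL y) + k * sg x y).sign = cyc x y := by
  rcases cand_cases x with rfl | rfl | rfl | ⟨hx0, hx1, hx2, hx⟩ <;>
  rcases cand_cases y with rfl | rfl | rfl | ⟨hy0, hy1, hy2, hy⟩
  all_goals try simp only [vR, vL, cyc, *]
  case inr.inr.inr.inr.inr.inr =>
    simp only [if_false, false_and]
    refine Eq.trans ?_ (sg_mul_sign (1 + A + B + k) (by omega) x y)
    congr 1; ring
  all_goals
    simp [sg, *]
    try first
      | omega
      | (apply Int.sign_eq_one_of_pos; omega)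
      | (apply Int.sign_eq_neg_one_of_neg; omega)
      | (split_ifs <;> first
          | omega
          | (apply Int.sign_eq_one_of_pos; omega)
          | (apply Int.sign_eq_neg_one_of_neg; omega))

lemma sign_lin (A B : ℕ) (h1 : B ≤ A) (h3 : 1 < A + B) (x y : ℕ) :
    (sg (vS x) (vS y) + A * sg (vR x) (vR y) + B * sg (vL x) (vL y)).sign = sg (vR x) (vR y) := by
  rcases cand_cases x with rfl | rfl | rfl | ⟨hx0, hx1, hx2, hx⟩ <;>
  rcases cand_cases y with rfl | rfl | rfl | ⟨hy0, hy1, hy2, hy⟩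
  all_goals try simp only [vR, vL, vS, *]
  case inr.inr.inr.inr.inr.inr =>
    simp only [if_false]
    refine Eq.trans ?_ (sg_mul_sign (1 + A + B) (by omega) x y)
    congr 1; ring
  all_goals
    simp [sg, *]
    try first
      | omega
      | (apply Int.sign_eq_one_of_pos; omega)
      | (apply Int.sign_eq_neg_one_of_neg; omega)
      | (split_ifs <;> first
          | omega
          | (apply Int.sign_eq_one_of_pos; omega)
          | (apply Int.sign_eq_neg_one_of_neg; omega))

lemma cyc_rot (x y : ℕ) : cyc (vR x) (vR y) = cyc x y := by
  unfold cyc vR sg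
  rcases cand_cases x with rfl | rfl | rfl | ⟨hx0, hx1, hx2, hx⟩ <;>
  rcases cand_cases y with rfl | rfl | rfl | ⟨hy0, hy1, hy2, hy⟩ <;>
  simp [*] <;> (try split_ifs) <;> omega

lemma tiebreak_mem {m : ℕ} [NeZero m] (τ : Pref m) (S : Finset (Fin m)) (h : S.Nonempty) :
    tiebreak τ S ∈ S := by
  unfold tiebreak
  rw [dif_pos h]
  have := Finset.min'_mem (S.image (fun c => τ c)) (h.image _)
  obtain ⟨c, hc, e⟩ := Finset.mem_image.1 this
  rw [← e]; simpa using hc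

lemma tiebreak_le {m : ℕ} [NeZero m] (τ : Pref m) (S : Finset (Fin m)) (c : Fin m) (h : c ∈ S) :
    τ (tiebreak τ S) ≤ τ c := by
  unfold tiebreak
  rw [dif_pos ⟨c, h⟩]
  rw [Equiv.apply_symm_apply]
  exact Finset.min'_le _ _ (Finset.mem_image_of_mem _ h)

lemma not_kASP_aux (m A B k : ℕ) [NeZero m]
    (hm : 3 ≤ m) (h1 : B ≤ A) (h2 : A < B + k + 1) (h3 : k + 1 < A + B) (F : SCC m)
    (hFne : ∀ (N : ℕ) (P : Profile m N), (F N P).Nonempty)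
    (hneutral : ∀ (π : Equiv.Perm (Fin m)) (N : ℕ) (P : Profile m N) (c : Fin m),
      c ∈ F N P ↔ π c ∈ F N (fun i => Equiv.trans π.symm (P i)))
    (hbir : ∀ (N : ℕ) (P : Profile m N) (a b : Pref m),
      (∀ i, P i = a ∨ P i = b) →
      (Finset.univ.filter (fun i => P i = b)).card <
        (Finset.univ.filter (fun i => P i = a)).card →
      F N P = {a.symm 0})
    (hmajor : ∀ (N N' : ℕ) (P : Profile m N) (P' : Profile m N'),
      (∀ c d : Fin m, (margin P c d).sign = (margin P' c d).sign) → F N P = F N' P') :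
    ¬ kASP m (1 + A + B) F k := by
  intro hk
  have hz : (0 : Fin m).val = 0 := rfl
  have h := hk (pR hm).symm (prof 1 1 (pR hm) (pR hm).symm A B (1 + A + B))
    ⟨0, by omega⟩ (pS hm)
  have hcop : addCopies (prof 1 1 (pR hm) (pR hm).symm A B (1 + A + B)) ⟨0, by omega⟩ k =
      prof 1 1 (pR hm) (pR hm).symm A B (1 + A + B + k) := by
    funext j
    simp only [addCopies, prof]
    split_ifs <;> first | rfl | omega
  have hupd : Function.update (prof 1 1 (pR hm) (pR hm).symm A B (1 + A + B)) ⟨0, by omega⟩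
      (pS hm) = prof (pS hm) 1 (pR hm) (pR hm).symm A B (1 + A + B + 0) := by
    funext j
    simp only [Function.update_apply, prof, Fin.ext_iff]
    split_ifs <;> rfl
  have hone : prof (m := m) 1 1 (pR hm) (pR hm).symm A B (1 + A + B) ⟨0, by omega⟩ = 1 := by
    simp [prof]
  rw [hcop, hupd, hone] at h
  have hlin : F (1 + A + B) (prof (pS hm) 1 (pR hm) (pR hm).symm A B (1 + A + B + 0))
      = {(pR hm).symm 0} := by
    have hb := hbir 1 (fun _ => pR hm) (pR hm) 1 (fun _ => Or.inl rfl) (by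
      have : pR hm ≠ 1 := by
        intro e
        have := congrArg (fun p : Pref m => (p 0).val) e
        simp [pR_val, vR] at this
      simp [this])
    rw [← hb]
    refine hmajor _ _ _ _ fun c d => ?_
    rw [margin_eq_sum (fun _ : Fin 1 => pR hm)]
    have := margin_prof (pS hm) 1 (pR hm) (pR hm).symm A B 0 c d
    have h5 := sign_lin A B h1 (by omega) c.val d.val
    have h6 := sg_mul_sign 1 one_pos (vR c.val) (vR d.val)
    rw [one_mul] at h6
    simp only [Nat.cast_zero, zero_mul, add_zero, pR_val, pL_val, pS_val] at this
    simp only [Finset.univ_unique, Finset.sum_singleton, pR_val]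
    rw [h6, ← h5]
    exact congrArg Int.sign this
  rw [hlin] at h
  have htb : tiebreak (pR hm).symm {(pR hm).symm 0} = (pR hm).symm 0 :=
    Finset.mem_singleton.1 (tiebreak_mem (pR hm).symm {(pR hm).symm 0} (by simp))
  rw [htb] at h
  have hc : ∀ c d : Fin m,
      (margin (prof 1 1 (pR hm) (pR hm).symm A B (1 + A + B + k)) c d).sign
        = cyc c.val d.val := by
    intro c d
    rw [margin_prof]
    exact sign_cyc A B k h1 h2 h3 c.val d.val
  generalize prof 1 1 (pR hm) (pR hm).symm A B (1 + A + B + k) = P at h hc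
  have hrot : ∀ x, x ∈ F _ P ↔ (pR hm).symm x ∈ F _ P := by
    intro x
    rw [hneutral (pR hm).symm]
    have : F _ (fun i => Equiv.trans (pR hm).symm.symm (P i)) = F _ P := by
      refine hmajor _ _ _ _ fun c d => ?_
      have e : margin (fun i => Equiv.trans (pR hm).symm.symm (P i)) c d
          = margin P (pR hm c) (pR hm d) := rfl
      rw [e, hc, hc]
      exact cyc_rot _ _
    rw [this]
  have hmem := tiebreak_mem (pR hm).symm (F _ P) (hFne _ P)
  have hle := tiebreak_le (pR hm).symm (F _ P)
  generalize tiebreak (pR hm).symm (F _ P) = w at h hmem hle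
  have hw : w.val ≤ 1 := by
    have : w.val ≤ ((pR hm).symm 0).val := h
    rw [pL_val] at this
    simpa [vL] using this
  have key : (⟨2, by omega⟩ : Fin m) ∈ F _ P := by
    rcases (by omega : w.val = 0 ∨ w.val = 1) with e | e
    · have h7 := (hrot _).1 ((hrot _).1 hmem)
      convert h7 using 1
      apply Fin.ext
      simp [pL_val, e, vL]
    · have h7 := (hrot _).1 hmem
      convert h7 using 1
      apply Fin.ext
      simp [pL_val, e, vL]
  have h8 := hle _ key
  rw [Fin.le_def, pL_val, pL_val] at h8
  rcases (by omega : w.val = 0 ∨ w.val = 1) with e | e <;> simp [e, vL] at h8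

/-- Any neutral, biranking-majority-consistent, majoritarian social
choice correspondence `F` is not `k`-augmentation strategyproof for any `1 ≤ k < n − 2`
(for `k = 0` this follows from the Gibbard–Satterthwaite theorem); consequently
`Φ(F) ≥ n − 2`. -/
theorem majoritarian_birankingMajority_manipPot_ge (m n : ℕ) [NeZero m]
    (hm : 3 ≤ m) (hn : 2 ≤ n) (F : SCC m)
    (hFne : ∀ (N : ℕ) (P : Profile m N), (F N P).Nonempty)
    -- neutrality: relabeling the candidates by a permutation `π` relabels the winners
    (hneutral : ∀ (π : Equiv.Perm (Fin m)) (N : ℕ) (P : Profile m N) (c : Fin m),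
      c ∈ F N P ↔ π c ∈ F N (fun i => Equiv.trans π.symm (P i)))
    -- biranking-majority-consistency: on a profile with only two rankings, one strictly
    -- more frequent, the unique winner is the top choice of the more frequent ranking
    (hbir : ∀ (N : ℕ) (P : Profile m N) (a b : Pref m),
      (∀ i, P i = a ∨ P i = b) →
      (Finset.univ.filter (fun i => P i = b)).card <
        (Finset.univ.filter (fun i => P i = a)).card →
      F N P = {a.symm 0})
    -- majoritarian: the winners depend only on the signs of the pairwise margins
    (hmajor : ∀ (N N' : ℕ) (P : Profile m N) (P' : Profile m N'),
      (∀ c d : Fin m, (margin P c d).sign = (margin P' c d).sign) → F N P = F N' P') :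
    (∀ k : ℕ, 1 ≤ k → k < n - 2 → ¬ kASP m n F k) ∧
      ((n - 2 : ℕ) : ℕ∞) ≤ manipPot m n F := by
  have main : ∀ k : ℕ, (1 ≤ k ∨ n = 3) → k < n - 2 → ¬ kASP m n F k := by
    intro k hk hkn
    have := not_kASP_aux m (n / 2) (n - 1 - n / 2) k hm (by omega) (by omega) (by omega) F
      hFne hneutral hbir hmajor
    have e : 1 + n / 2 + (n - 1 - n / 2) = n := by omega
    rwa [e] at this
  refine ⟨fun k hk => main k (Or.inl hk), ?_⟩
  unfold manipPot
  refine le_sInf ?_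
  rintro _ ⟨k, hk, rfl⟩
  by_contra hlt
  have hlt' : k < n - 2 := by
    have : (k : ℕ∞) < ((n - 2 : ℕ) : ℕ∞) := not_le.1 hlt
    exact_mod_cast this
  by_cases h3 : n = 3
  · exact main k (Or.inr h3) hlt' (hk k le_rfl)
  · rcases Nat.eq_zero_or_pos k with h0 | h0
    · exact main 1 (Or.inl le_rfl) (by omega) (hk 1 (by omega))
    · exact main k (Or.inl h0) hlt' (hk k le_rfl)
end

section
/- For every integer k ≥ 0, the Pareto social choice correspondence is not k-augmentation strategyproof: there exist a profile, a voter i, a manipulation ≻'_i, and a tie-breaker τ such that Pareto_τ(≻'_i, ≻_{−i}) ≻_i Pareto_τ(≻ + k(≻_i)). Consequently the manipulation potential of the Pareto rule is ∞. -/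
open Finset

/-- Pareto rule: all candidates not Pareto dominated by another candidate. -/
def paretoRule (m : ℕ) : SCC m := fun _ P =>
  Finset.univ.filter (fun c => ¬ ∃ d : Fin m, ∀ i, P i d < P i c)


theorem tiebreak_eq_of {m : ℕ} [NeZero m] (τ : Pref m) (A : Finset (Fin m)) (c : Fin m)
    (hc : c ∈ A) (h : ∀ d ∈ A, τ c ≤ τ d) : tiebreak τ A = c := by
  have hA : A.Nonempty := ⟨c, hc⟩
  unfold tiebreak
  rw [dif_pos hA, Equiv.symm_apply_eq]
  apply le_antisymm
  · exact Finset.min'_le _ _ (Finset.mem_image_of_mem _ hc)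
  · apply Finset.le_min'
    intro y hy
    obtain ⟨d, hd, rfl⟩ := Finset.mem_image.1 hy
    exact h d hd

theorem pareto_not_kASP (m n : ℕ) [NeZero m] (hm : 3 ≤ m) (hn : 2 ≤ n) (k : ℕ) :
    ¬ kASP m n (paretoRule m) k := by
  intro H
  obtain ⟨a, ha⟩ : ∃ a : Fin m, a.val = 0 := ⟨⟨0, by omega⟩, rfl⟩
  obtain ⟨c, hc⟩ : ∃ a : Fin m, a.val = 1 := ⟨⟨1, by omega⟩, rfl⟩
  obtain ⟨b, hb⟩ : ∃ a : Fin m, a.val = 2 := ⟨⟨2, by omega⟩, rfl⟩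
  have hac : a ≠ c := by intro h; rw [h] at ha; omega
  have hab : a ≠ b := by intro h; rw [h] at ha; omega
  have hcb : c ≠ b := by intro h; rw [h] at hc; omega
  obtain ⟨i, hi⟩ : ∃ a : Fin n, a.val = 0 := ⟨⟨0, by omega⟩, rfl⟩
  obtain ⟨j, hj⟩ : ∃ a : Fin n, a.val = 1 := ⟨⟨1, by omega⟩, rfl⟩
  have hji : j ≠ i := by intro h; rw [h] at hj; omega
  let Q : Pref m := Equiv.swap a b
  let q : Pref m := Equiv.swap c b
  let τ : Pref m := Equiv.swap a c
  let P : Profile m n := fun v => if v = i then Equiv.refl _ else Q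
  have hQa : Q a = b := Equiv.swap_apply_left _ _
  have hQb : Q b = a := Equiv.swap_apply_right _ _
  have hQc : Q c = c := Equiv.swap_apply_of_ne_of_ne hac.symm hcb
  have hqa : q a = a := Equiv.swap_apply_of_ne_of_ne hac hab
  have hqb : q b = c := Equiv.swap_apply_right _ _
  have hqc : q c = b := Equiv.swap_apply_left _ _
  have hτa : τ a = c := Equiv.swap_apply_left _ _
  have hτc : τ c = a := Equiv.swap_apply_right _ _
  have hPi : P i = Equiv.refl _ := if_pos rfl
  have hP : ∀ v, v ≠ i → P v = Q := fun v hv => if_neg hv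
  have h1 : tiebreak τ (paretoRule m (n + k) (addCopies P i k)) = c := by
    apply tiebreak_eq_of
    · simp only [paretoRule, Finset.mem_filter, Finset.mem_univ, true_and]
      rintro ⟨d, hd⟩
      have e1 := hd ⟨i, by omega⟩
      have e2 := hd ⟨j, by omega⟩
      simp only [addCopies, Fin.is_lt, dif_pos, Fin.eta, hPi, hP j hji, hQc,
        Equiv.refl_apply] at e1 e2
      have : d = a := by apply Fin.ext; rw [Fin.lt_def] at e1; omega
      rw [this, hQa, Fin.lt_def] at e2
      omega
    · intro d _
      rw [hτc, Fin.le_def]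
      omega
  have h2 : tiebreak τ (paretoRule m n (Function.update P i q)) = a := by
    apply tiebreak_eq_of
    · simp only [paretoRule, Finset.mem_filter, Finset.mem_univ, true_and]
      rintro ⟨d, hd⟩
      have e1 := hd i
      rw [Function.update_self, hqa, Fin.lt_def] at e1
      omega
    · intro d hd
      rw [hτa, Fin.le_def]
      by_contra hlt
      have h0 : τ d = a := by apply Fin.ext; omega
      have hdc : d = c := τ.injective (h0.trans hτc.symm)
      simp only [paretoRule, Finset.mem_filter, Finset.mem_univ, true_and] at hd
      apply hd
      refine ⟨b, fun v => ?_⟩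
      rw [hdc]
      by_cases hv : v = i
      · rw [hv, Function.update_self, hqb, hqc, Fin.lt_def]
        omega
      · rw [Function.update_of_ne hv, hP v hv, hQb, hQc, Fin.lt_def]
        omega
  have h3 := H τ P i q
  rw [h1, h2, hPi, Equiv.refl_apply, Equiv.refl_apply, Fin.le_def] at h3
  omega

/-- For every `k ≥ 0`, the Pareto rule is not `k`-augmentation
strategyproof; consequently its manipulation potential is `∞`. -/
theorem pareto_manipPot_infinite (m n : ℕ) [NeZero m] (hm : 3 ≤ m) (hn : 2 ≤ n) :
    (∀ k : ℕ, ¬ kASP m n (paretoRule m) k) ∧ manipPot m n (paretoRule m) = ⊤ := by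
  refine ⟨pareto_not_kASP m n hm hn, ?_⟩
  have : {k : ℕ | ∀ k' : ℕ, k ≤ k' → kASP m n (paretoRule m) k'} = ∅ := by
    apply Set.eq_empty_of_forall_notMem
    intro k hk
    exact pareto_not_kASP m n hm hn k (hk k le_rfl)
  rw [manipPot, this, Set.image_empty, sInf_empty]
end
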